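/- Let Ω ⊆ ℝ³ be open and let f = (F, f₃) : Ω → ℝ³ be a smooth conformal map. Then ZF ≠ 0 on Ω and the classical type Schwarzian vanishes: S_CL(f) = Z³F/ZF − (3/2)·(Z²F/ZF)² = 0 on Ω. -/

import Mathlib

noncomputable section

open Complex

/-- The underlying space of the first Heisenberg group: ℝ³ with coordinates (x, y, t). -/
abbrev Heis : Type := ℝ × ℝ × ℝ

/-- The left-invariant vector field X = ∂/∂x + 2y ∂/∂t, as a derivation. -/
def XD {E : Type*} [NormedAddCommGroup E] [NormedSpace ℝ E] (u : Heis → E) (p : Heis) : E :=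
  fderiv ℝ u p (1, 0, 2 * p.2.1)

/-- The left-invariant vector field Y = ∂/∂y − 2x ∂/∂t, as a derivation. -/
def YD {E : Type*} [NormedAddCommGroup E] [NormedSpace ℝ E] (u : Heis → E) (p : Heis) : E :=
  fderiv ℝ u p (0, 1, -(2 * p.1))

/-- The vector field T = ∂/∂t, as a derivation. -/
def TD {E : Type*} [NormedAddCommGroup E] [NormedSpace ℝ E] (u : Heis → E) (p : Heis) : E :=
  fderiv ℝ u p (0, 0, 1)

/-- Z = (X − iY)/2. -/
def ZD (u : Heis → ℂ) (p : Heis) : ℂ := (XD u p - Complex.I * YD u p) / 2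

/-- Z̄ = (X + iY)/2. -/
def ZbD (u : Heis → ℂ) (p : Heis) : ℂ := (XD u p + Complex.I * YD u p) / 2

/-- The complexification F = f₁ + i f₂ of the horizontal components. -/
def CF (f1 f2 : Heis → ℝ) : Heis → ℂ := fun p => (f1 p : ℂ) + (f2 p : ℂ) * Complex.I

/-- Complexification of a real-valued function. -/
def Cplx (u : Heis → ℝ) : Heis → ℂ := fun p => (u p : ℂ)

/-- The horizontal Jacobian J_F = Xf₁·Yf₂ − Yf₁·Xf₂. -/
def JF (f1 f2 : Heis → ℝ) (p : Heis) : ℝ := XD f1 p * YD f2 p - YD f1 p * XD f2 p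

/-- The contact equations on Ω. -/
def ContactOn (f1 f2 f3 : Heis → ℝ) (Ω : Set Heis) : Prop :=
  ∀ p ∈ Ω, XD f3 p - 2 * f2 p * XD f1 p + 2 * f1 p * XD f2 p = 0 ∧
           YD f3 p - 2 * f2 p * YD f1 p + 2 * f1 p * YD f2 p = 0

/-- f = (f₁,f₂,f₃) is conformal on Ω: smooth, contact, J_F > 0, and the conformality
equations hold. -/
def ConformalOn (f1 f2 f3 : Heis → ℝ) (Ω : Set Heis) : Prop :=
  ContDiffOn ℝ (⊤ : ℕ∞) f1 Ω ∧ ContDiffOn ℝ (⊤ : ℕ∞) f2 Ω ∧ ContDiffOn ℝ (⊤ : ℕ∞) f3 Ω ∧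
  ContactOn f1 f2 f3 Ω ∧ (∀ p ∈ Ω, 0 < JF f1 f2 p) ∧
  ∀ p ∈ Ω, (XD f1 p) ^ 2 + (XD f2 p) ^ 2 = (YD f1 p) ^ 2 + (YD f2 p) ^ 2 ∧
           XD f1 p * YD f1 p + XD f2 p * YD f2 p = 0

/-- The sub-Laplacian Δ_H = X² + Y². -/
def LapH {E : Type*} [NormedAddCommGroup E] [NormedSpace ℝ E] (u : Heis → E) (p : Heis) : E :=
  XD (XD u) p + YD (YD u) p

/-- The CR Schwarzian derivative S_CR(f) = (1/2)·J_F·Z²(J_F⁻¹). -/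
def SCR (f1 f2 : Heis → ℝ) (p : Heis) : ℂ :=
  (1 / 2 : ℂ) * (JF f1 f2 p : ℂ) * ZD (ZD (fun q => (((JF f1 f2 q)⁻¹ : ℝ) : ℂ))) p

/-- The classical type Schwarzian S_CL(f) = Z³F/ZF − (3/2)(Z²F/ZF)². -/
def SCL (f1 f2 : Heis → ℝ) (p : Heis) : ℂ :=
  ZD (ZD (ZD (CF f1 f2))) p / ZD (CF f1 f2) p
    - (3 / 2 : ℂ) * (ZD (ZD (CF f1 f2)) p / ZD (CF f1 f2) p) ^ 2

/-- The Preschwarzian Pf = Z(ln J_F). -/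
def PS (f1 f2 : Heis → ℝ) (p : Heis) : ℂ := ZD (Cplx (fun q => Real.log (JF f1 f2 q))) p

/-- The map (f₁,f₂,f₃) packaged as a map Heis → Heis. -/
def Fmap (f1 f2 f3 : Heis → ℝ) (p : Heis) : Heis := (f1 p, f2 p, f3 p)

/-- Derivatives of a smooth function along a smooth vector field are smooth. -/
lemma contDiffOn_fderiv_apply {Ω : Set Heis} (hΩ : IsOpen Ω) {u : Heis → ℂ}
    (hu : ContDiffOn ℝ (⊤ : ℕ∞) u Ω) {v : Heis → Heis} (hv : ContDiff ℝ (⊤ : ℕ∞) v) :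
    ContDiffOn ℝ (⊤ : ℕ∞) (fun p => fderiv ℝ u p (v p)) Ω :=
  (hu.fderiv_of_isOpen hΩ (by simp)).clm_apply hv.contDiffOn

lemma contDiffOn_XD {Ω : Set Heis} (hΩ : IsOpen Ω) {u : Heis → ℂ}
    (hu : ContDiffOn ℝ (⊤ : ℕ∞) u Ω) : ContDiffOn ℝ (⊤ : ℕ∞) (XD u) Ω :=
  contDiffOn_fderiv_apply hΩ hu (v := fun p => (1, 0, 2 * p.2.1)) (by fun_prop)

lemma contDiffOn_YD {Ω : Set Heis} (hΩ : IsOpen Ω) {u : Heis → ℂ}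
    (hu : ContDiffOn ℝ (⊤ : ℕ∞) u Ω) : ContDiffOn ℝ (⊤ : ℕ∞) (YD u) Ω :=
  contDiffOn_fderiv_apply hΩ hu (v := fun p => (0, 1, -(2 * p.1))) (by fun_prop)

lemma contDiffOn_TD {Ω : Set Heis} (hΩ : IsOpen Ω) {u : Heis → ℂ}
    (hu : ContDiffOn ℝ (⊤ : ℕ∞) u Ω) : ContDiffOn ℝ (⊤ : ℕ∞) (TD u) Ω :=
  contDiffOn_fderiv_apply hΩ hu (v := fun _ => (0, 0, 1)) (by fun_prop)

lemma contDiffOn_ZD {Ω : Set Heis} (hΩ : IsOpen Ω) {u : Heis → ℂ}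
    (hu : ContDiffOn ℝ (⊤ : ℕ∞) u Ω) : ContDiffOn ℝ (⊤ : ℕ∞) (ZD u) Ω :=
  ((contDiffOn_XD hΩ hu).sub (contDiffOn_const.mul (contDiffOn_YD hΩ hu))).div_const 2

lemma contDiffOn_ZbD {Ω : Set Heis} (hΩ : IsOpen Ω) {u : Heis → ℂ}
    (hu : ContDiffOn ℝ (⊤ : ℕ∞) u Ω) : ContDiffOn ℝ (⊤ : ℕ∞) (ZbD u) Ω :=
  ((contDiffOn_XD hΩ hu).add (contDiffOn_const.mul (contDiffOn_YD hΩ hu))).div_const 2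

lemma ContDiffOn.differentiableAt_of_isOpen {Ω : Set Heis} (hΩ : IsOpen Ω) {u : Heis → ℂ}
    (hu : ContDiffOn ℝ (⊤ : ℕ∞) u Ω) {p : Heis} (hp : p ∈ Ω) : DifferentiableAt ℝ u p :=
  (hu.contDiffAt (hΩ.mem_nhds hp)).differentiableAt (by simp)

lemma fderiv_congr_of_isOpen {Ω : Set Heis} (hΩ : IsOpen Ω) {u w : Heis → ℂ}
    (h : Set.EqOn u w Ω) {p : Heis} (hp : p ∈ Ω) : fderiv ℝ u p = fderiv ℝ w p :=
  (h.eventuallyEq_of_mem (hΩ.mem_nhds hp)).fderiv_eq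

lemma ZD_congr {Ω : Set Heis} (hΩ : IsOpen Ω) {u w : Heis → ℂ}
    (h : Set.EqOn u w Ω) : Set.EqOn (ZD u) (ZD w) Ω := fun p hp => by
  simp only [ZD, XD, YD, fderiv_congr_of_isOpen hΩ h hp]

lemma ZbD_congr {Ω : Set Heis} (hΩ : IsOpen Ω) {u w : Heis → ℂ}
    (h : Set.EqOn u w Ω) : Set.EqOn (ZbD u) (ZbD w) Ω := fun p hp => by
  simp only [ZbD, XD, YD, fderiv_congr_of_isOpen hΩ h hp]

lemma TD_congr {Ω : Set Heis} (hΩ : IsOpen Ω) {u w : Heis → ℂ}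
    (h : Set.EqOn u w Ω) : Set.EqOn (TD u) (TD w) Ω := fun p hp => by
  simp only [TD, fderiv_congr_of_isOpen hΩ h hp]

lemma ZD_const (c : ℂ) (p : Heis) : ZD (fun _ => c) p = 0 := by
  simp [ZD, XD, YD]

lemma ZbD_const (c : ℂ) (p : Heis) : ZbD (fun _ => c) p = 0 := by
  simp [ZbD, XD, YD]

lemma TD_const (c : ℂ) (p : Heis) : TD (fun _ => c) p = 0 := by
  simp [TD]

section Leibniz

variable {u w : Heis → ℂ} {p : Heis}

lemma ZD_add (hu : DifferentiableAt ℝ u p) (hw : DifferentiableAt ℝ w p) :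
    ZD (fun q => u q + w q) p = ZD u p + ZD w p := by
  simp only [ZD, XD, YD, fderiv_fun_add hu hw, add_apply]
  ring

lemma ZD_sub (hu : DifferentiableAt ℝ u p) (hw : DifferentiableAt ℝ w p) :
    ZD (fun q => u q - w q) p = ZD u p - ZD w p := by
  simp only [ZD, XD, YD, fderiv_fun_sub hu hw, sub_apply]
  ring

lemma ZD_mul (hu : DifferentiableAt ℝ u p) (hw : DifferentiableAt ℝ w p) :
    ZD (fun q => u q * w q) p = ZD u p * w p + u p * ZD w p := by
  simp only [ZD, XD, YD, fderiv_fun_mul hu hw, add_apply,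
    smul_apply, smul_eq_mul]
  ring

lemma ZD_const_mul (c : ℂ) (hu : DifferentiableAt ℝ u p) :
    ZD (fun q => c * u q) p = c * ZD u p := by
  rw [ZD_mul (differentiableAt_const c) hu, ZD_const, zero_mul, zero_add]

lemma ZbD_mul (hu : DifferentiableAt ℝ u p) (hw : DifferentiableAt ℝ w p) :
    ZbD (fun q => u q * w q) p = ZbD u p * w p + u p * ZbD w p := by
  simp only [ZbD, XD, YD, fderiv_fun_mul hu hw, add_apply,
    smul_apply, smul_eq_mul]
  ring

lemma ZbD_const_mul (c : ℂ) (hu : DifferentiableAt ℝ u p) :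
    ZbD (fun q => c * u q) p = c * ZbD u p := by
  rw [ZbD_mul (differentiableAt_const c) hu, ZbD_const, zero_mul, zero_add]

lemma TD_mul (hu : DifferentiableAt ℝ u p) (hw : DifferentiableAt ℝ w p) :
    TD (fun q => u q * w q) p = TD u p * w p + u p * TD w p := by
  simp only [TD, fderiv_fun_mul hu hw, add_apply,
    smul_apply, smul_eq_mul]
  ring

lemma TD_const_mul (c : ℂ) (hu : DifferentiableAt ℝ u p) :
    TD (fun q => c * u q) p = c * TD u p := by
  rw [TD_mul (differentiableAt_const c) hu, TD_const, zero_mul, zero_add]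

end Leibniz

/-- The derivative of a directional derivative, in terms of the second derivative. -/
lemma fderiv_fderiv_apply {u : Heis → ℂ} {p : Heis} (hu : DifferentiableAt ℝ (fderiv ℝ u) p)
    {v : Heis → Heis} {dv : Heis →L[ℝ] Heis} (hv : HasFDerivAt v dv p) (w : Heis) :
    fderiv ℝ (fun q => fderiv ℝ u q (v q)) p w =
      fderiv ℝ (fderiv ℝ u) p w (v p) + fderiv ℝ u p (dv w) := by
  rw [(hu.hasFDerivAt.clm_apply hv).fderiv]
  simp [add_comm]

section Commutators

variable {Ω : Set Heis} {u : Heis → ℂ} {p : Heis}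

lemma fderiv_XD_apply (hu : DifferentiableAt ℝ (fderiv ℝ u) p) (w : Heis) :
    fderiv ℝ (XD u) p w =
      fderiv ℝ (fderiv ℝ u) p w (1, 0, 2 * p.2.1) + fderiv ℝ u p (0, 0, 2 * w.2.1) := by
  have hv : HasFDerivAt (fun q : Heis => ((1, 0, 2 * q.2.1) : Heis))
      ((0 : Heis →L[ℝ] ℝ).prod ((0 : Heis →L[ℝ] ℝ).prod ((2 : ℝ) •
        (ContinuousLinearMap.fst ℝ ℝ ℝ).comp (ContinuousLinearMap.snd ℝ ℝ (ℝ × ℝ))))) p :=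
    (hasFDerivAt_const _ _).prodMk ((hasFDerivAt_const _ _).prodMk
      (((ContinuousLinearMap.fst ℝ ℝ ℝ).comp
        (ContinuousLinearMap.snd ℝ ℝ (ℝ × ℝ))).hasFDerivAt.const_mul 2))
  exact fderiv_fderiv_apply hu hv w

lemma fderiv_YD_apply (hu : DifferentiableAt ℝ (fderiv ℝ u) p) (w : Heis) :
    fderiv ℝ (YD u) p w =
      fderiv ℝ (fderiv ℝ u) p w (0, 1, -(2 * p.1)) + fderiv ℝ u p (0, 0, -(2 * w.1)) := by
  have hv : HasFDerivAt (fun q : Heis => ((0, 1, -(2 * q.1)) : Heis))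
      ((0 : Heis →L[ℝ] ℝ).prod ((0 : Heis →L[ℝ] ℝ).prod (-((2 : ℝ) •
        ContinuousLinearMap.fst ℝ ℝ (ℝ × ℝ))))) p :=
    (hasFDerivAt_const _ _).prodMk ((hasFDerivAt_const _ _).prodMk
      ((ContinuousLinearMap.fst ℝ ℝ (ℝ × ℝ)).hasFDerivAt.const_mul 2).neg)
  exact fderiv_fderiv_apply hu hv w

lemma fderiv_TD_apply (hu : DifferentiableAt ℝ (fderiv ℝ u) p) (w : Heis) :
    fderiv ℝ (TD u) p w = fderiv ℝ (fderiv ℝ u) p w (0, 0, 1) := by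
  have := fderiv_fderiv_apply hu (hasFDerivAt_const ((0, 0, 1) : Heis) p) w
  rwa [zero_apply, map_zero, add_zero] at this

lemma fderiv_vertical (s : ℝ) : fderiv ℝ u p (0, 0, s) = s * TD u p := by
  have : ((0, 0, s) : Heis) = s • (0, 0, 1) := by simp
  rw [this, map_smul, TD, Complex.real_smul]

lemma differentiableAt_fderiv_of_isOpen (hΩ : IsOpen Ω) (hu : ContDiffOn ℝ (⊤ : ℕ∞) u Ω)
    (hp : p ∈ Ω) :
    DifferentiableAt ℝ (fderiv ℝ u) p :=
  ((hu.fderiv_of_isOpen hΩ (m := (⊤ : ℕ∞)) (by simp)).contDiffAt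
    (hΩ.mem_nhds hp)).differentiableAt (by simp)

lemma fderiv_fderiv_symm (hΩ : IsOpen Ω) (hu : ContDiffOn ℝ (⊤ : ℕ∞) u Ω)
    (hp : p ∈ Ω) (v w : Heis) :
    fderiv ℝ (fderiv ℝ u) p v w = fderiv ℝ (fderiv ℝ u) p w v :=
  ((hu.contDiffAt (hΩ.mem_nhds hp)).isSymmSndFDerivAt
    (by simpa using WithTop.coe_le_coe.2 (le_top : (2 : ℕ∞) ≤ ⊤))) v w

lemma XD_YD_sub_YD_XD (hΩ : IsOpen Ω) (hu : ContDiffOn ℝ (⊤ : ℕ∞) u Ω)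
    (hp : p ∈ Ω) :
    XD (YD u) p - YD (XD u) p = -4 * TD u p := by
  have h2 := differentiableAt_fderiv_of_isOpen hΩ hu hp
  rw [XD, YD, fderiv_YD_apply h2, fderiv_XD_apply h2,
    fderiv_fderiv_symm hΩ hu hp (0, 1, -(2 * p.1)), fderiv_vertical, fderiv_vertical]
  push_cast
  ring

lemma XD_TD (hΩ : IsOpen Ω) (hu : ContDiffOn ℝ (⊤ : ℕ∞) u Ω)
    (hp : p ∈ Ω) :
    XD (TD u) p = TD (XD u) p := by
  have h2 := differentiableAt_fderiv_of_isOpen hΩ hu hp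
  rw [XD, TD, fderiv_TD_apply h2, fderiv_XD_apply h2,
    fderiv_fderiv_symm hΩ hu hp (0, 0, 1), fderiv_vertical]
  simp

lemma YD_TD (hΩ : IsOpen Ω) (hu : ContDiffOn ℝ (⊤ : ℕ∞) u Ω)
    (hp : p ∈ Ω) :
    YD (TD u) p = TD (YD u) p := by
  have h2 := differentiableAt_fderiv_of_isOpen hΩ hu hp
  rw [YD, TD, fderiv_TD_apply h2, fderiv_YD_apply h2,
    fderiv_fderiv_symm hΩ hu hp (0, 0, 1), fderiv_vertical]
  simp

lemma fderiv_ZD_apply (hΩ : IsOpen Ω) (hu : ContDiffOn ℝ (⊤ : ℕ∞) u Ω)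
    (hp : p ∈ Ω) (w : Heis) :
    fderiv ℝ (ZD u) p w = (fderiv ℝ (XD u) p w - I * fderiv ℝ (YD u) p w) / 2 := by
  have hX := ((contDiffOn_XD hΩ hu).differentiableAt_of_isOpen hΩ hp).hasFDerivAt
  have hY := ((contDiffOn_YD hΩ hu).differentiableAt_of_isOpen hΩ hp).hasFDerivAt
  have h : HasFDerivAt (ZD u) _ p := (hX.sub (hY.const_mul I)).mul_const (2 : ℂ)⁻¹
  rw [h.fderiv]
  simp
  ring

lemma fderiv_ZbD_apply (hΩ : IsOpen Ω) (hu : ContDiffOn ℝ (⊤ : ℕ∞) u Ω)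
    (hp : p ∈ Ω) (w : Heis) :
    fderiv ℝ (ZbD u) p w = (fderiv ℝ (XD u) p w + I * fderiv ℝ (YD u) p w) / 2 := by
  have hX := ((contDiffOn_XD hΩ hu).differentiableAt_of_isOpen hΩ hp).hasFDerivAt
  have hY := ((contDiffOn_YD hΩ hu).differentiableAt_of_isOpen hΩ hp).hasFDerivAt
  have h : HasFDerivAt (ZbD u) _ p := (hX.add (hY.const_mul I)).mul_const (2 : ℂ)⁻¹
  rw [h.fderiv]
  simp
  ring

/-- The commutation relation [Z, Z̄] = −2iT. -/
lemma ZD_ZbD_sub_ZbD_ZD (hΩ : IsOpen Ω) (hu : ContDiffOn ℝ (⊤ : ℕ∞) u Ω)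
    (hp : p ∈ Ω) :
    ZD (ZbD u) p - ZbD (ZD u) p = -2 * I * TD u p := by
  have h := XD_YD_sub_YD_XD hΩ hu hp
  simp only [XD, YD] at h
  rw [ZD, ZbD, XD, YD, XD, YD]
  simp only [fderiv_ZD_apply hΩ hu hp, fderiv_ZbD_apply hΩ hu hp]
  linear_combination (I / 2) * h

/-- The commutation relation [Z, T] = 0. -/
lemma ZD_TD (hΩ : IsOpen Ω) (hu : ContDiffOn ℝ (⊤ : ℕ∞) u Ω)
    (hp : p ∈ Ω) :
    ZD (TD u) p = TD (ZD u) p := by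
  rw [ZD, XD_TD hΩ hu hp, YD_TD hΩ hu hp, TD, TD, TD, fderiv_ZD_apply hΩ hu hp]

end Commutators

/-- If F is CR, G is anti-CR and the third component h satisfies the complex contact equations,
then `Z²F · Z̄G + 2 ZF · ZZ̄G = 0`. -/
lemma ZD_ZD_mul_ZbD_add_eq_zero {Ω : Set Heis} (hΩ : IsOpen Ω) {F G h : Heis → ℂ}
    (hF : ContDiffOn ℝ (⊤ : ℕ∞) F Ω) (hG : ContDiffOn ℝ (⊤ : ℕ∞) G Ω)
    (hh : ContDiffOn ℝ (⊤ : ℕ∞) h Ω)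
    (hZbF : Set.EqOn (ZbD F) (fun _ => 0) Ω) (hZG : Set.EqOn (ZD G) (fun _ => 0) Ω)
    (hZh : Set.EqOn (ZD h) (fun q => I * (G q * ZD F q)) Ω)
    (hZbh : Set.EqOn (ZbD h) (fun q => -I * (F q * ZbD G q)) Ω) {p : Heis} (hp : p ∈ Ω) :
    ZD (ZD F) p * ZbD G p + 2 * (ZD F p * ZD (ZbD G) p) = 0 := by
  have hA := contDiffOn_ZD hΩ hF
  have hB := contDiffOn_ZbD hΩ hG
  have hTF := contDiffOn_TD hΩ hF
  have hTG := contDiffOn_TD hΩ hG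
  have dF {q} (hq : q ∈ Ω) := hF.differentiableAt_of_isOpen hΩ hq
  have dG {q} (hq : q ∈ Ω) := hG.differentiableAt_of_isOpen hΩ hq
  have dA {q} (hq : q ∈ Ω) := hA.differentiableAt_of_isOpen hΩ hq
  have dB {q} (hq : q ∈ Ω) := hB.differentiableAt_of_isOpen hΩ hq
  have dTF := hTF.differentiableAt_of_isOpen hΩ hp
  have dTG := hTG.differentiableAt_of_isOpen hΩ hp
  have hZbA {q} (hq : q ∈ Ω) : ZbD (ZD F) q = 2 * I * TD F q := by
    have := ZD_ZbD_sub_ZbD_ZD hΩ hF hq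
    rw [ZD_congr hΩ hZbF hq, ZD_const] at this
    linear_combination -this
  have hZB {q} (hq : q ∈ Ω) : ZD (ZbD G) q = -2 * I * TD G q := by
    have := ZD_ZbD_sub_ZbD_ZD hΩ hG hq
    rw [ZbD_congr hΩ hZG hq, ZbD_const] at this
    linear_combination this
  have hTh : Set.EqOn (TD h)
      (fun q => ZD F q * ZbD G q + I * (G q * TD F q - F q * TD G q)) Ω := fun q hq => by
    have := ZD_ZbD_sub_ZbD_ZD hΩ hh hq
    rw [ZD_congr hΩ hZbh hq, ZbD_congr hΩ hZh hq, ZD_const_mul _ ((dF hq).fun_mul (dB hq)),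
      ZbD_const_mul _ ((dG hq).fun_mul (dA hq)), ZD_mul (dF hq) (dB hq), ZbD_mul (dG hq) (dA hq),
      hZbA hq, hZB hq] at this
    linear_combination (-I / 2) * this +
      (TD h q - ZD F q * ZbD G q - I * (G q * TD F q - F q * TD G q)) * I_sq
  have hZTF : ZD (TD F) p = TD (ZD F) p := ZD_TD hΩ hF hp
  have hZTG : ZD (TD G) p = 0 := by
    rw [ZD_TD hΩ hG hp, TD_congr hΩ hZG hp, TD_const]
  have key := ZD_TD hΩ hh hp
  rw [ZD_congr hΩ hTh hp, TD_congr hΩ hZh hp, TD_const_mul _ ((dG hp).fun_mul (dA hp)),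
    TD_mul (dG hp) (dA hp),
    ZD_add ((dA hp).fun_mul (dB hp)) ((((dG hp).fun_mul dTF).fun_sub ((dF hp).fun_mul dTG)).const_mul I),
    ZD_const_mul _ (((dG hp).fun_mul dTF).fun_sub ((dF hp).fun_mul dTG)),
    ZD_sub ((dG hp).fun_mul dTF) ((dF hp).fun_mul dTG), ZD_mul (dA hp) (dB hp), ZD_mul (dG hp) dTF,
    ZD_mul (dF hp) dTG, hZTF, hZTG, hZG hp, hZB hp] at key
  rw [hZB hp]
  linear_combination key

/-- Under the hypotheses of `ZD_ZD_mul_ZbD_add_eq_zero`, `F` satisfies the differentiated identity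
`Z³F · Z̄G + 3 Z²F · ZZ̄G = 0`. -/
lemma ZD_ZD_ZD_mul_ZbD_add_eq_zero {Ω : Set Heis} (hΩ : IsOpen Ω) {F G h : Heis → ℂ}
    (hF : ContDiffOn ℝ (⊤ : ℕ∞) F Ω) (hG : ContDiffOn ℝ (⊤ : ℕ∞) G Ω)
    (hh : ContDiffOn ℝ (⊤ : ℕ∞) h Ω)
    (hZbF : Set.EqOn (ZbD F) (fun _ => 0) Ω) (hZG : Set.EqOn (ZD G) (fun _ => 0) Ω)
    (hZh : Set.EqOn (ZD h) (fun q => I * (G q * ZD F q)) Ω)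
    (hZbh : Set.EqOn (ZbD h) (fun q => -I * (F q * ZbD G q)) Ω) {p : Heis} (hp : p ∈ Ω) :
    ZD (ZD (ZD F)) p * ZbD G p + 3 * (ZD (ZD F) p * ZD (ZbD G) p) = 0 := by
  have hA := contDiffOn_ZD hΩ hF
  have hB := contDiffOn_ZbD hΩ hG
  have dA := hA.differentiableAt_of_isOpen hΩ hp
  have dB := hB.differentiableAt_of_isOpen hΩ hp
  have dZA := (contDiffOn_ZD hΩ hA).differentiableAt_of_isOpen hΩ hp
  have dZB := (contDiffOn_ZD hΩ hB).differentiableAt_of_isOpen hΩ hp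
  have hZB : Set.EqOn (ZD (ZbD G)) (fun q => -2 * I * TD G q) Ω := fun q hq => by
    have := ZD_ZbD_sub_ZbD_ZD hΩ hG hq
    rw [ZbD_congr hΩ hZG hq, ZbD_const, sub_zero] at this
    exact this
  have hZZB : ZD (ZD (ZbD G)) p = 0 := by
    rw [ZD_congr hΩ hZB hp,
      ZD_const_mul _ ((contDiffOn_TD hΩ hG).differentiableAt_of_isOpen hΩ hp),
      ZD_TD hΩ hG hp, TD_congr hΩ hZG hp, TD_const, mul_zero]
  have hzero : Set.EqOn (fun q => ZD (ZD F) q * ZbD G q + 2 * (ZD F q * ZD (ZbD G) q))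
      (fun _ => 0) Ω := fun q hq =>
    ZD_ZD_mul_ZbD_add_eq_zero hΩ hF hG hh hZbF hZG hZh hZbh hq
  have key := ZD_congr hΩ hzero hp
  rw [ZD_const, ZD_add (dZA.fun_mul dB) ((dA.fun_mul dZB).const_mul 2), ZD_const_mul _ (dA.fun_mul dZB),
    ZD_mul dZA dB, ZD_mul dA dZB, hZZB] at key
  linear_combination key

/-- The algebraic content of orientation-preserving conformality: the Cauchy–Riemann equations. -/
lemma cauchyRiemann_of_conformal {a b c d : ℝ} (hJ : 0 < a * d - c * b)
    (hnorm : a ^ 2 + b ^ 2 = c ^ 2 + d ^ 2) (horth : a * c + b * d = 0) : d = a ∧ c = -b := by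
  have hsq : (a * d - c * b) ^ 2 = (a ^ 2 + b ^ 2) ^ 2 := by
    linear_combination (a ^ 2 + b ^ 2) * (-hnorm) - (a * c + b * d) * horth
  have heq : a * d - c * b = a ^ 2 + b ^ 2 :=
    (pow_left_inj₀ hJ.le (by positivity) two_ne_zero).mp hsq
  constructor
  · nlinarith [sq_nonneg (a - d), sq_nonneg (b + c)]
  · nlinarith [sq_nonneg (a - d), sq_nonneg (b + c)]

lemma fderiv_CF_apply {g1 g2 : Heis → ℝ} {p : Heis} (h1 : DifferentiableAt ℝ g1 p)
    (h2 : DifferentiableAt ℝ g2 p) (v : Heis) :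
    fderiv ℝ (CF g1 g2) p v = (fderiv ℝ g1 p v : ℂ) + (fderiv ℝ g2 p v : ℂ) * I := by
  have h : HasFDerivAt (CF g1 g2) _ p :=
    (ofRealCLM.hasFDerivAt.comp p h1.hasFDerivAt).add
      ((ofRealCLM.hasFDerivAt.comp p h2.hasFDerivAt).mul_const I)
  rw [h.fderiv]
  simp [mul_comm]

lemma contDiffOn_CF {Ω : Set Heis} {g1 g2 : Heis → ℝ} (h1 : ContDiffOn ℝ (⊤ : ℕ∞) g1 Ω)
    (h2 : ContDiffOn ℝ (⊤ : ℕ∞) g2 Ω) : ContDiffOn ℝ (⊤ : ℕ∞) (CF g1 g2) Ω :=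
  (ofRealCLM.contDiff.comp_contDiffOn h1).add
    ((ofRealCLM.contDiff.comp_contDiffOn h2).mul contDiffOn_const)

/-- for a smooth conformal map f on Ω, ZF ≠ 0 on Ω and the classical type
Schwarzian vanishes: S_CL(f) = 0 on Ω. -/
theorem stmt_7 (Ω : Set Heis) (hΩ : IsOpen Ω) (f1 f2 f3 : Heis → ℝ)
    (hconf : ConformalOn f1 f2 f3 Ω) :
    (∀ p ∈ Ω, ZD (CF f1 f2) p ≠ 0) ∧ (∀ p ∈ Ω, SCL f1 f2 p = 0) := by
  obtain ⟨h1, h2, h3, hcontact, hJ, hcf⟩ := hconf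
  have d1 {q} (hq : q ∈ Ω) : DifferentiableAt ℝ f1 q :=
    (h1.contDiffAt (hΩ.mem_nhds hq)).differentiableAt (by simp)
  have d2 {q} (hq : q ∈ Ω) : DifferentiableAt ℝ f2 q :=
    (h2.contDiffAt (hΩ.mem_nhds hq)).differentiableAt (by simp)
  have d3 {q} (hq : q ∈ Ω) : DifferentiableAt ℝ f3 q :=
    (h3.contDiffAt (hΩ.mem_nhds hq)).differentiableAt (by simp)
  have hCR {q} (hq : q ∈ Ω) : YD f2 q = XD f1 q ∧ YD f1 q = -XD f2 q :=
    cauchyRiemann_of_conformal (hJ q hq) (hcf q hq).1 (hcf q hq).2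
  set F := CF f1 f2 with hFdef
  set G := CF f1 (-f2) with hGdef
  set h := CF f3 0 with hhdef
  have hF : ContDiffOn ℝ (⊤ : ℕ∞) F Ω := contDiffOn_CF h1 h2
  have hG : ContDiffOn ℝ (⊤ : ℕ∞) G Ω := contDiffOn_CF h1 h2.neg
  have hh : ContDiffOn ℝ (⊤ : ℕ∞) h Ω := contDiffOn_CF h3 contDiffOn_const
  have hXF {q} (hq : q ∈ Ω) : XD F q = XD f1 q + XD f2 q * I :=
    fderiv_CF_apply (d1 hq) (d2 hq) _
  have hYF {q} (hq : q ∈ Ω) : YD F q = -XD f2 q + XD f1 q * I := by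
    have : YD F q = YD f1 q + YD f2 q * I := fderiv_CF_apply (d1 hq) (d2 hq) _
    rw [this, (hCR hq).1, (hCR hq).2, ofReal_neg]
  have hXG {q} (hq : q ∈ Ω) : XD G q = XD f1 q - XD f2 q * I := by
    rw [XD, fderiv_CF_apply (d1 hq) (d2 hq).neg, fderiv_neg]
    simp [XD, sub_eq_add_neg]
  have hYG {q} (hq : q ∈ Ω) : YD G q = -XD f2 q - XD f1 q * I := by
    have : YD G q = YD f1 q - YD f2 q * I := by
      rw [YD, fderiv_CF_apply (d1 hq) (d2 hq).neg, fderiv_neg]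
      simp [YD, sub_eq_add_neg]
    rw [this, (hCR hq).1, (hCR hq).2, ofReal_neg]
  have hd0 {q} : DifferentiableAt ℝ (0 : Heis → ℝ) q := differentiableAt_const 0
  have hXh {q} (hq : q ∈ Ω) : XD h q = 2 * f2 q * XD f1 q - 2 * f1 q * XD f2 q := by
    have : XD h q = XD f3 q := by
      rw [XD, hhdef, fderiv_CF_apply (d3 hq) hd0]
      simp [XD]
    rw [this, show XD f3 q = 2 * f2 q * XD f1 q - 2 * f1 q * XD f2 q by
      linear_combination (hcontact q hq).1]
    push_cast
    ring
  have hYh {q} (hq : q ∈ Ω) : YD h q = -2 * f2 q * XD f2 q - 2 * f1 q * XD f1 q := by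
    have : YD h q = YD f3 q := by
      rw [YD, hhdef, fderiv_CF_apply (d3 hq) hd0]
      simp [YD]
    have hY := (hcontact q hq).2
    rw [(hCR hq).1, (hCR hq).2] at hY
    rw [this, show YD f3 q = -2 * f2 q * XD f2 q - 2 * f1 q * XD f1 q by
      linear_combination hY]
    push_cast
    ring
  have hA {q} (hq : q ∈ Ω) : ZD F q = XD f1 q + XD f2 q * I := by
    rw [ZD, hXF hq, hYF hq]
    linear_combination (-XD f1 q / 2 : ℂ) * I_sq
  have hB {q} (hq : q ∈ Ω) : ZbD G q = XD f1 q - XD f2 q * I := by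
    rw [ZbD, hXG hq, hYG hq]
    linear_combination (-XD f1 q / 2 : ℂ) * I_sq
  have hZbF : Set.EqOn (ZbD F) (fun _ => 0) Ω := fun q hq => by
    rw [ZbD, hXF hq, hYF hq]
    linear_combination (XD f1 q / 2 : ℂ) * I_sq
  have hZG : Set.EqOn (ZD G) (fun _ => 0) Ω := fun q hq => by
    rw [ZD, hXG hq, hYG hq]
    linear_combination (XD f1 q / 2 : ℂ) * I_sq
  have hFq (q) : F q = f1 q + f2 q * I := rfl
  have hGq (q) : G q = f1 q - f2 q * I := by simp [hGdef, CF, sub_eq_add_neg]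
  have hZh : Set.EqOn (ZD h) (fun q => I * (G q * ZD F q)) Ω := fun q hq => by
    simp only [hA hq, hGq]
    rw [ZD, hXh hq, hYh hq]
    linear_combination
      (f2 q * XD f1 q - f1 q * XD f2 q + f2 q * XD f2 q * I : ℂ) * I_sq
  have hZbh : Set.EqOn (ZbD h) (fun q => -I * (F q * ZbD G q)) Ω := fun q hq => by
    simp only [hB hq, hFq]
    rw [ZbD, hXh hq, hYh hq]
    linear_combination
      (f2 q * XD f1 q - f1 q * XD f2 q - f2 q * XD f2 q * I : ℂ) * I_sq
  have hprod {q} (hq : q ∈ Ω) : ZD F q * ZbD G q ≠ 0 := by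
    have hJq := hJ q hq
    rw [JF, (hCR hq).1, (hCR hq).2] at hJq
    have : ZD F q * ZbD G q = ((XD f1 q * XD f1 q - -XD f2 q * XD f2 q : ℝ) : ℂ) := by
      rw [hA hq, hB hq]
      push_cast
      linear_combination (-XD f2 q * XD f2 q : ℂ) * I_sq
    rw [this]
    exact_mod_cast hJq.ne'
  refine ⟨fun p hp => left_ne_zero_of_mul (hprod hp), fun p hp => ?_⟩
  have hA0 := left_ne_zero_of_mul (hprod hp)
  have hB0 := right_ne_zero_of_mul (hprod hp)
  have e1 := ZD_ZD_mul_ZbD_add_eq_zero hΩ hF hG hh hZbF hZG hZh hZbh hp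
  have e2 := ZD_ZD_ZD_mul_ZbD_add_eq_zero hΩ hF hG hh hZbF hZG hZh hZbh hp
  have e3 : ZD (ZD (ZD F)) p * ZD F p = 3 / 2 * ZD (ZD F) p ^ 2 := by
    apply mul_right_cancel₀ hB0
    linear_combination ZD F p * e2 - 3 / 2 * ZD (ZD F) p * e1
  rw [SCL, ← hFdef, sub_eq_zero]
  field_simp
  linear_combination 2 * e3
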